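/- arXiv:1908.06398 — 2 statements merged into one kernel-verified Lean document; each statement's English description precedes it below -/
import Mathlib

section
/- Let a < b be reals and let F and G be Borel probability measures on [a,b], with cumulative distribution functions also denoted F and G. For c ∈ [a,b], let condition (1) be: (b−c)·[∫_a^c F(x)dx − ∫_a^c G(x)dx] + 2·∫_a^c (∫_a^x F(z)dz − ∫_a^x G(z)dz) dx ≤ 0, and condition (2) be: ∫_a^c (∫_a^x F(z)dz − ∫_a^x G(z)dz) dx ≤ 0. Suppose that the implication holds: if condition (2) holds for all c ∈ [a,b] then condition (1) holds for all c ∈ [a,b]. Then: condition (2) holds for all c ∈ [a,b] if and only if F ⪰_{2,[a,b]-I} G. -/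
open MeasureTheory Set

noncomputable section

/-- A nonnegative function `v` on `[a,b]` is `α`-convex if `x ↦ (v x)^(1/α)` is convex
on `[a,b]`. -/
def AlphaConvexOn (α a b : ℝ) (v : ℝ → ℝ) : Prop :=
  (∀ x ∈ Icc a b, 0 ≤ v x) ∧ ConvexOn ℝ (Icc a b) (fun x => v x ^ (1 / α))

/-- `u ∈ I_{α,[a,b]}`: `u` is bounded and measurable on `[a,b]`, weakly increasing on
`[a,b]`, and `x ↦ u b - u x` is `α`-convex on `[a,b]`. -/
def MemI (α a b : ℝ) (u : ℝ → ℝ) : Prop :=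
  (∃ M, ∀ x ∈ Icc a b, |u x| ≤ M) ∧
  Measurable u ∧
  MonotoneOn u (Icc a b) ∧
  AlphaConvexOn α a b (fun x => u b - u x)

/-- `F ⪰_{α,[a,b]-I} G`: the `α,[a,b]`-concave stochastic order. -/
def ConcaveOrder (α a b : ℝ) (F G : Measure ℝ) : Prop :=
  ∀ u : ℝ → ℝ, MemI α a b u → ∫ x, u x ∂G ≤ ∫ x, u x ∂F

/-- `F ⪰_{n,[a,b]-S} G`: the `n,[a,b]`-sufficient stochastic order. -/
def SuffOrder (n : ℕ) (a b : ℝ) (F G : Measure ℝ) : Prop :=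
  ∀ c : Fin n → ℝ, (∀ i, c i ∈ Icc a b) →
    ∫ x, ∏ i, max (c i - x) 0 ∂F ≤ ∫ x, ∏ i, max (c i - x) 0 ∂G

/-- The cumulative distribution function of a Borel measure on `ℝ`. -/
def cdfR (μ : Measure ℝ) (x : ℝ) : ℝ := (μ (Iic x)).toReal

/-!
Fubini turns condition (2) into the comparison of `∫ (c - x)₊²` under `F` and `G`, and condition
(1) into the comparison of `∫ (c - x)₊ (b - x)₊`. For `c ≤ d ≤ b`,
`(c - x)₊ (d - x)₊ = (c - x)₊² + (d - c) (c - x)₊` is affine in `d`, so (1) and (2), the cases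
`d = b` and `d = c`, give the 2-sufficient order. Any `n`-sufficient order implies the `n`-concave
one: `(u b - u x) ^ (1 / n)` is convex, antitone and zero at `b`, hence a pointwise limit of
nonnegative combinations of hinges `(c - x)₊`, and the `n`-th power of such a combination is a
nonnegative combination of `n`-fold products of hinges. Conversely, `-(c - x)₊²` is an admissible
test function.
-/

section HingeIntegrals

variable {a : ℝ} {μ : Measure ℝ} [IsFiniteMeasure μ]

theorem integrable_prod_max_sub {ι : Type*} [Fintype ι] (ha : ∀ᵐ x ∂μ, a ≤ x) (c : ι → ℝ) :
    Integrable (fun x => ∏ i, max (c i - x) 0) μ := by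
  refine Integrable.of_bound (C := ∏ i, max (c i - a) 0)
    (Continuous.aestronglyMeasurable (by fun_prop)) ?_
  filter_upwards [ha] with x hx
  rw [Real.norm_of_nonneg (Finset.prod_nonneg fun i _ => le_max_right _ _)]
  gcongr

theorem integrable_max_sub_pow (ha : ∀ᵐ x ∂μ, a ≤ x) (c : ℝ) (n : ℕ) :
    Integrable (fun x => max (c - x) 0 ^ n) μ := by
  simpa using integrable_prod_max_sub ha fun _ : Fin n => c

theorem integrable_max_sub (ha : ∀ᵐ x ∂μ, a ≤ x) (c : ℝ) :
    Integrable (fun x => max (c - x) 0) μ := by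
  simpa using integrable_max_sub_pow ha c 1

theorem integral_cdfR (ha : ∀ᵐ x ∂μ, a ≤ x) {c : ℝ} (hc : a ≤ c) :
    ∫ x in a..c, cdfR μ x = ∫ z, max (c - z) 0 ∂μ := by
  have hbdd : (fun z => max (c - z) 0) ≤ᵐ[μ] fun _ => c - a := by
    filter_upwards [ha] with z hz using max_le (by linarith) (by linarith)
  have hlevel : ∀ t ∈ Ioc 0 (c - a), μ.real {z | t ≤ max (c - z) 0} = cdfR μ (c - t) := by
    intro t ht
    have : {z | t ≤ max (c - z) 0} = Iic (c - t) := by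
      ext z
      simp only [mem_ofPred_eq, le_max_iff, not_le.2 ht.1, or_false, mem_Iic]
      exact le_sub_comm
    rw [this, cdfR, measureReal_def]
  calc ∫ x in a..c, cdfR μ x = ∫ t in 0..c - a, cdfR μ (c - t) := by
        rw [intervalIntegral.integral_comp_sub_left, sub_sub_cancel, sub_zero]
    _ = ∫ t in Ioc 0 (c - a), μ.real {z | t ≤ max (c - z) 0} := by
        rw [intervalIntegral.integral_of_le (sub_nonneg.2 hc)]
        exact (setIntegral_congr_fun measurableSet_Ioc hlevel).symm
    _ = ∫ z, max (c - z) 0 ∂μ :=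
        ((integrable_max_sub ha c).integral_eq_integral_Ioc_meas_le
          (ae_of_all _ fun _ => le_max_right _ _) hbdd).symm

theorem intervalIntegral_max_sub {z : ℝ} (haz : a ≤ z) (c : ℝ) :
    ∫ x in a..c, max (x - z) 0 = max (c - z) 0 ^ 2 / 2 := by
  have hzero : ∀ y ≤ z, ∫ x in a..y, max (x - z) 0 = 0 := fun y hy =>
    intervalIntegral.integral_zero_ae <| ae_of_all _ fun x hx =>
      max_eq_right (sub_nonpos.2 (hx.2.trans (max_le haz hy)))
  rcases le_total c z with hcz | hzc
  · rw [hzero c hcz, max_eq_right (sub_nonpos.2 hcz)]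
    norm_num
  · have hint (p q : ℝ) : IntervalIntegrable (fun x => max (x - z) 0) volume p q :=
      Continuous.intervalIntegrable (by fun_prop) p q
    have hright : ∫ x in z..c, max (x - z) 0 = ∫ x in z..c, (x - z) := by
      refine intervalIntegral.integral_congr fun x hx => max_eq_left (sub_nonneg.2 ?_)
      exact (uIcc_of_le hzc ▸ hx).1
    rw [← intervalIntegral.integral_add_adjacent_intervals (hint a z) (hint z c), hzero z le_rfl,
      hright, max_eq_left (sub_nonneg.2 hzc)]
    rw [intervalIntegral.integral_sub intervalIntegral.intervalIntegrable_id
      intervalIntegrable_const, integral_id, intervalIntegral.integral_const, smul_eq_mul]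
    ring

theorem integral_integral_cdfR (ha : ∀ᵐ x ∂μ, a ≤ x) {c : ℝ} (hc : a ≤ c) :
    ∫ x in a..c, ∫ z in a..x, cdfR μ z = (∫ z, max (c - z) 0 ^ 2 ∂μ) / 2 := by
  have hint : Integrable (Function.uncurry fun x z => max (x - z) 0)
      ((volume.restrict (uIoc a c)).prod μ) := by
    rw [uIoc_of_le hc]
    refine ((integrable_max_sub ha c).comp_snd _).mono' (Measurable.aestronglyMeasurable <| by
      simp only [Function.uncurry_def]; fun_prop) ?_
    filter_upwards [Measure.quasiMeasurePreserving_fst.ae (ae_restrict_mem measurableSet_Ioc)]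
      with p hp
    rw [Function.uncurry_def, Real.norm_of_nonneg (le_max_right _ _)]
    gcongr
    exact hp.2
  calc ∫ x in a..c, ∫ z in a..x, cdfR μ z = ∫ x in a..c, ∫ z, max (x - z) 0 ∂μ :=
        intervalIntegral.integral_congr fun x hx => integral_cdfR ha (uIcc_of_le hc ▸ hx).1
    _ = ∫ z, (∫ x in a..c, max (x - z) 0) ∂μ := intervalIntegral_integral_swap hint
    _ = ∫ z, max (c - z) 0 ^ 2 / 2 ∂μ :=
        integral_congr_ae <| ha.mono fun z hz => intervalIntegral_max_sub hz c
    _ = (∫ z, max (c - z) 0 ^ 2 ∂μ) / 2 := integral_div 2 _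

end HingeIntegrals

section SuffOrderTwo

variable {a b : ℝ} {F G : Measure ℝ} [IsFiniteMeasure F] [IsFiniteMeasure G]

theorem integral_sub_integral_cdfR (hF : ∀ᵐ x ∂F, a ≤ x) (hG : ∀ᵐ x ∂G, a ≤ x)
    {c : ℝ} (hc : a ≤ c) :
    ∫ x in a..c, ((∫ z in a..x, cdfR F z) - ∫ z in a..x, cdfR G z) =
      ((∫ z, max (c - z) 0 ^ 2 ∂F) - ∫ z, max (c - z) 0 ^ 2 ∂G) / 2 := by
  have hcdf (μ : Measure ℝ) [IsFiniteMeasure μ] :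
      IntervalIntegrable (fun x => ∫ z in a..x, cdfR μ z) volume a c := by
    have hmono : Monotone (cdfR μ) := fun x y hxy => measureReal_mono (Iic_subset_Iic.2 hxy)
    exact (intervalIntegral.continuous_primitive (fun _ _ => hmono.intervalIntegrable) a)
      |>.intervalIntegrable a c
  rw [intervalIntegral.integral_sub (hcdf F) (hcdf G), integral_integral_cdfR hF hc,
    integral_integral_cdfR hG hc, sub_div]

theorem integral_sub_integral_cdfR_nonpos_iff (hF : ∀ᵐ x ∂F, a ≤ x) (hG : ∀ᵐ x ∂G, a ≤ x)
    {c : ℝ} (hc : a ≤ c) :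
    ∫ x in a..c, ((∫ z in a..x, cdfR F z) - ∫ z in a..x, cdfR G z) ≤ 0 ↔
      ∫ z, max (c - z) 0 ^ 2 ∂F ≤ ∫ z, max (c - z) 0 ^ 2 ∂G := by
  rw [integral_sub_integral_cdfR hF hG hc, div_le_iff₀ two_pos, zero_mul, sub_nonpos]

theorem integral_max_sub_mul_max_sub {μ : Measure ℝ} [IsFiniteMeasure μ] (ha : ∀ᵐ x ∂μ, a ≤ x)
    {c d : ℝ} (hcd : c ≤ d) :
    ∫ x, max (c - x) 0 * max (d - x) 0 ∂μ =
      ∫ x, max (c - x) 0 ^ 2 ∂μ + (d - c) * ∫ x, max (c - x) 0 ∂μ := by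
  rw [← integral_const_mul, ← integral_add (integrable_max_sub_pow ha c 2)
    ((integrable_max_sub ha c).const_mul _)]
  congr 1 with x
  rcases le_total c x with hcx | hxc
  · simp [max_eq_right (sub_nonpos.2 hcx)]
  · rw [max_eq_left (sub_nonneg.2 hxc), max_eq_left (sub_nonneg.2 (hxc.trans hcd))]
    ring

theorem add_mul_nonpos_of_endpoints {R : Type*} [CommRing R] [LinearOrder R] [IsStrictOrderedRing R]
    {p q t T : R} (ht : t ∈ Icc 0 T) (h₀ : q ≤ 0)
    (hT : q + T * p ≤ 0) : q + t * p ≤ 0 := by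
  rcases le_total p 0 with hp | hp
  · exact add_nonpos h₀ (mul_nonpos_of_nonneg_of_nonpos ht.1 hp)
  · exact (by gcongr; exact ht.2 : q + t * p ≤ q + T * p).trans hT

theorem integral_max_sub_mul_max_sub_le (hF : ∀ᵐ x ∂F, a ≤ x) (hG : ∀ᵐ x ∂G, a ≤ x)
    {c d : ℝ} (hac : a ≤ c) (hcd : c ≤ d) (hdb : d ≤ b)
    (h₁ : (b - c) * ((∫ x in a..c, cdfR F x) - ∫ x in a..c, cdfR G x) +
      2 * ∫ x in a..c, ((∫ z in a..x, cdfR F z) - ∫ z in a..x, cdfR G z) ≤ 0)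
    (h₂ : ∫ x in a..c, ((∫ z in a..x, cdfR F z) - ∫ z in a..x, cdfR G z) ≤ 0) :
    ∫ x, max (c - x) 0 * max (d - x) 0 ∂F ≤ ∫ x, max (c - x) 0 * max (d - x) 0 ∂G := by
  rw [integral_sub_integral_cdfR_nonpos_iff hF hG hac, ← sub_nonpos] at h₂
  rw [integral_sub_integral_cdfR hF hG hac, integral_cdfR hF hac, integral_cdfR hG hac,
    mul_div_cancel₀ _ two_ne_zero, add_comm] at h₁
  rw [integral_max_sub_mul_max_sub hF hcd, integral_max_sub_mul_max_sub hG hcd, ← sub_nonpos]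
  have := add_mul_nonpos_of_endpoints ⟨sub_nonneg.2 hcd, sub_le_sub_right hdb c⟩ h₂ h₁
  linarith

theorem suffOrder_two_of_integral_cdfR_nonpos (hF : ∀ᵐ x ∂F, a ≤ x) (hG : ∀ᵐ x ∂G, a ≤ x)
    (h₁ : ∀ c ∈ Icc a b, (b - c) * ((∫ x in a..c, cdfR F x) - ∫ x in a..c, cdfR G x) +
      2 * ∫ x in a..c, ((∫ z in a..x, cdfR F z) - ∫ z in a..x, cdfR G z) ≤ 0)
    (h₂ : ∀ c ∈ Icc a b,
      ∫ x in a..c, ((∫ z in a..x, cdfR F z) - ∫ z in a..x, cdfR G z) ≤ 0) :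
    SuffOrder 2 a b F G := by
  intro c hc
  simp only [Fin.prod_univ_two]
  rcases le_total (c 0) (c 1) with h | h
  · exact integral_max_sub_mul_max_sub_le hF hG (hc 0).1 h (hc 1).2 (h₁ _ (hc 0)) (h₂ _ (hc 0))
  · simp only [mul_comm (max (c 0 - _) 0)]
    exact integral_max_sub_mul_max_sub_le hF hG (hc 1).1 h (hc 0).2 (h₁ _ (hc 1)) (h₂ _ (hc 1))

end SuffOrderTwo

section HingeInterpolation

open Filter Topology

theorem sum_secondDiff_mul_succ {R : Type*} [CommRing R] (f : ℕ → R) (m : ℕ) :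
    ∑ j ∈ Finset.range m, (f j - 2 * f (j + 1) + f (j + 2)) * (j + 1) =
      f 0 - (m + 1) * f m + m * f (m + 1) := by
  induction m with
  | zero => simp
  | succ m ih => rw [Finset.sum_range_succ, ih]; push_cast; ring

theorem sum_secondDiff_mul_max {R : Type*} [CommRing R] [LinearOrder R] [IsStrictOrderedRing R]
    {f : ℕ → R} {N : ℕ} (hf : ∀ j, N ≤ j → f j = 0) {k : ℕ}
    (hk : k ≤ N) :
    ∑ i ∈ Finset.range N, (f i - 2 * f (i + 1) + f (i + 2)) * max ((i + 1 : R) - k) 0 = f k := by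
  obtain ⟨m, rfl⟩ := Nat.exists_eq_add_of_le hk
  have hbefore : ∀ i ∈ Finset.range k, max ((i + 1 : R) - k) 0 = 0 := fun i hi =>
    max_eq_right <| sub_nonpos.2 <| mod_cast Finset.mem_range.1 hi
  have hafter (j : ℕ) : max (((k + j : ℕ) + 1 : R) - k) 0 = j + 1 := by
    rw [max_eq_left] <;> push_cast <;> linarith [j.cast_nonneg (α := R)]
  rw [Finset.sum_range_add, Finset.sum_eq_zero fun i hi => by rw [hbefore i hi, mul_zero], zero_add]
  simp only [hafter]
  simpa [hf, add_assoc] using sum_secondDiff_mul_succ (fun j => f (k + j)) m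

theorem two_mul_map_midpoint_le_of_convexOn {E : Type*} [AddCommGroup E] [Module ℝ E] {s : Set E}
    {f : E → ℝ} (hf : ConvexOn ℝ s f) {x y : E} (hx : x ∈ s) (hy : y ∈ s) :
    2 * f (midpoint ℝ x y) ≤ f x + f y := by
  have h := hf.2 hx hy one_half_pos.le one_half_pos.le (add_halves 1)
  rw [← smul_add, one_div, ← invOf_eq_inv, ← midpoint_eq_smul_add, smul_eq_mul, smul_eq_mul,
    invOf_eq_inv] at h
  linarith

/-- The `k`-th node of the uniform partition of `[a, b]` into `N` pieces
(constantly `a` for `N = 0`, by division by zero). -/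
def gridPoint (a b : ℝ) (N k : ℕ) : ℝ := a + k / N * (b - a)

/-- The jump at the node `i + 1` of the slope of the piecewise linear interpolant of `g` on the
uniform partition of `[a, b]` into `N` pieces, `g` being continued beyond `b` by the constant
`g b`. -/
def slopeJump (g : ℝ → ℝ) (a b : ℝ) (N i : ℕ) : ℝ :=
  N / (b - a) * (g (gridPoint a b N (min i N)) - 2 * g (gridPoint a b N (min (i + 1) N)) +
    g (gridPoint a b N (min (i + 2) N)))

/-- The piecewise linear interpolant of `g` on the uniform partition of `[a, b]` into `N` pieces,
written as a combination of the hinge functions `x ↦ max (c - x) 0`. It vanishes at `b`, so it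
interpolates only functions with `g b = 0`. -/
def hingeInterp (g : ℝ → ℝ) (a b : ℝ) (N : ℕ) (x : ℝ) : ℝ :=
  ∑ i ∈ Finset.range N, slopeJump g a b N i * max (gridPoint a b N (i + 1) - x) 0

variable {a b : ℝ} {g : ℝ → ℝ} {N : ℕ}

@[simp]
theorem gridPoint_zero : gridPoint a b N 0 = a := by simp [gridPoint]

theorem gridPoint_self (hN : N ≠ 0) : gridPoint a b N N = b := by
  simp [gridPoint, hN]

theorem gridPoint_sub (j k : ℕ) :
    gridPoint a b N j - gridPoint a b N k = (b - a) / N * (j - k) := by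
  rw [gridPoint, gridPoint]; ring

theorem midpoint_gridPoint (i : ℕ) :
    midpoint ℝ (gridPoint a b N i) (gridPoint a b N (i + 2)) = gridPoint a b N (i + 1) := by
  simp only [gridPoint, midpoint_eq_smul_add, invOf_eq_inv, smul_eq_mul]
  push_cast
  ring

theorem monotone_gridPoint (hab : a ≤ b) : Monotone (gridPoint a b N) := by
  intro j k hjk
  rw [gridPoint, gridPoint]
  have := sub_nonneg.2 hab
  gcongr

theorem gridPoint_mem_Icc (hab : a ≤ b) {k : ℕ} (hk : k ≤ N) : gridPoint a b N k ∈ Icc a b := by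
  rcases eq_or_ne N 0 with rfl | hN
  · simp [gridPoint, hab]
  · constructor
    · simpa using monotone_gridPoint (N := N) hab (Nat.zero_le k)
    · simpa [gridPoint_self hN] using monotone_gridPoint (N := N) hab hk

theorem hingeInterp_gridPoint (hab : a < b) (hgb : g b = 0) (hN : N ≠ 0) {k : ℕ} (hk : k ≤ N) :
    hingeInterp g a b N (gridPoint a b N k) = g (gridPoint a b N k) := by
  have hab' : b - a ≠ 0 := (sub_pos.2 hab).ne'
  have hscale (j : ℕ) : max (gridPoint a b N j - gridPoint a b N k) 0 =
      (b - a) / N * max ((j : ℝ) - k) 0 := by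
    rw [gridPoint_sub, mul_max_of_nonneg _ _ (div_nonneg (sub_nonneg.2 hab.le) N.cast_nonneg),
      mul_zero]
  have hvanish : ∀ j, N ≤ j → g (gridPoint a b N (min j N)) = 0 := fun j hj => by
    rw [min_eq_right hj, gridPoint_self hN, hgb]
  have := sum_secondDiff_mul_max hvanish hk
  rw [min_eq_left hk] at this
  rw [← this, hingeInterp]
  refine Finset.sum_congr rfl fun i _ => ?_
  rw [hscale, slopeJump]
  push_cast
  field_simp

theorem slopeJump_nonneg (hab : a ≤ b) (hg : ConvexOn ℝ (Icc a b) g)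
    (hanti : AntitoneOn g (Icc a b)) {i : ℕ} (hi : i < N) : 0 ≤ slopeJump g a b N i := by
  refine mul_nonneg (div_nonneg N.cast_nonneg (sub_nonneg.2 hab)) ?_
  rw [min_eq_left hi.le, min_eq_left (Nat.succ_le_of_lt hi)]
  have hmem {k : ℕ} (hk : k ≤ N) : gridPoint a b N k ∈ Icc a b := gridPoint_mem_Icc hab hk
  rcases Nat.lt_or_ge (i + 1) N with hlt | hge
  · rw [min_eq_left (Nat.succ_le_of_lt hlt)]
    have := two_mul_map_midpoint_le_of_convexOn hg (hmem hi.le) (hmem hlt)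
    rw [midpoint_gridPoint] at this
    linarith
  · have hlast : i.succ = N := le_antisymm hi hge
    rw [min_eq_right (by omega : N ≤ i + 2), hlast]
    have := hanti (hmem hi.le) (hmem le_rfl) (monotone_gridPoint hab hi.le)
    linarith

theorem continuous_hingeInterp : Continuous (hingeInterp g a b N) := by
  unfold hingeInterp
  fun_prop

theorem antitone_hingeInterp (hab : a ≤ b) (hg : ConvexOn ℝ (Icc a b) g)
    (hanti : AntitoneOn g (Icc a b)) : Antitone (hingeInterp g a b N) := by
  intro x y hxy
  refine Finset.sum_le_sum fun i hi => ?_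
  have := slopeJump_nonneg hab hg hanti (Finset.mem_range.1 hi)
  gcongr

theorem hingeInterp_mem_Icc (hab : a < b) (hg : ConvexOn ℝ (Icc a b) g)
    (hanti : AntitoneOn g (Icc a b)) (hgb : g b = 0) (hN : N ≠ 0) {x : ℝ} (hx : x ∈ Icc a b) :
    hingeInterp g a b N x ∈ Icc 0 (g a) := by
  have hH := antitone_hingeInterp (N := N) hab.le hg hanti
  have hleft := hingeInterp_gridPoint hab hgb hN N.zero_le
  have hright := hingeInterp_gridPoint hab hgb hN le_rfl
  rw [gridPoint_zero] at hleft
  rw [gridPoint_self hN, hgb] at hright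
  exact ⟨hright ▸ hH hx.2, hleft ▸ hH hx.1⟩

theorem tendsto_of_antitone_of_eq_gridPoint (hab : a < b) {H : ℕ → ℝ → ℝ}
    (hH : ∀ N, Antitone (H N))
    (hgrid : ∀ N ≠ 0, ∀ k ≤ N, H N (gridPoint a b N k) = g (gridPoint a b N k))
    {x : ℝ} (hx : x ∈ Icc a b) (hg : ContinuousAt g x) :
    Tendsto (fun N => H N x) atTop (𝓝 (g x)) := by
  obtain ⟨hax, hxb⟩ := hx
  have hba := sub_pos.2 hab
  set t := (x - a) / (b - a) with ht
  have ht0 : 0 ≤ t := div_nonneg (sub_nonneg.2 hax) hba.le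
  have ht1 : t ≤ 1 := (div_le_one hba).2 (sub_le_sub_right hxb a)
  have hxt : a + t * (b - a) = x := by rw [ht, div_mul_cancel₀ _ hba.ne', add_sub_cancel]
  have hlim {k : ℕ → ℕ} (hk : Tendsto (fun N : ℕ => (k N : ℝ) / N) atTop (𝓝 t)) :
      Tendsto (fun N => g (gridPoint a b N (k N))) atTop (𝓝 (g x)) :=
    hg.tendsto.comp <| hxt ▸ (hk.mul_const (b - a)).const_add a
  have hfloor := hlim <|
    (tendsto_nat_floor_mul_div_atTop ht0).comp tendsto_natCast_atTop_atTop
  have hceil := hlim <|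
    (tendsto_nat_ceil_mul_div_atTop ht0).comp tendsto_natCast_atTop_atTop
  refine tendsto_of_tendsto_of_tendsto_of_le_of_le' hceil hfloor ?_ ?_ <;>
    filter_upwards [eventually_ne_atTop 0] with N hN <;>
    have hNpos : (0 : ℝ) < N := by positivity
  · have hle : ⌈t * N⌉₊ ≤ N := Nat.ceil_le.2 (mul_le_of_le_one_left hNpos.le ht1)
    rw [← hgrid N hN _ hle]
    refine hH N ?_
    rw [← hxt, gridPoint]
    gcongr
    exact (le_div_iff₀ hNpos).2 (Nat.le_ceil _)
  · have hle : ⌊t * N⌋₊ ≤ N := Nat.floor_le_of_le (mul_le_of_le_one_left hNpos.le ht1)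
    rw [← hgrid N hN _ hle]
    refine hH N ?_
    rw [← hxt, gridPoint]
    gcongr
    exact (div_le_iff₀ hNpos).2 (Nat.floor_le (by positivity))

theorem tendsto_hingeInterp (hab : a < b) (hg : ConvexOn ℝ (Icc a b) g)
    (hanti : AntitoneOn g (Icc a b)) (hgb : g b = 0) {x : ℝ} (hx : x ∈ Icc a b) :
    Tendsto (fun N => hingeInterp g a b N x) atTop (𝓝 (g x)) := by
  have hgrid (N : ℕ) (hN : N ≠ 0) (k : ℕ) (hk : k ≤ N) := hingeInterp_gridPoint hab hgb hN hk
  rcases hx.1.eq_or_lt with rfl | hax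
  · refine tendsto_const_nhds.congr' ?_
    filter_upwards [eventually_ne_atTop 0] with N hN
    simpa using (hgrid N hN 0 N.zero_le).symm
  rcases hx.2.eq_or_lt with rfl | hxb
  · refine tendsto_const_nhds.congr' ?_
    filter_upwards [eventually_ne_atTop 0] with N hN
    simpa [gridPoint_self hN] using (hgrid N hN N le_rfl).symm
  have hcont : ContinuousAt g x :=
    (interior_Icc (a := a) (b := b) ▸ hg.continuousOn_interior).continuousAt
      (Ioo_mem_nhds hax hxb)
  exact tendsto_of_antitone_of_eq_gridPoint hab (fun _ => antitone_hingeInterp hab.le hg hanti)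
    hgrid hx hcont

end HingeInterpolation

section StochasticOrders

open Filter Topology

variable {a b : ℝ} {n : ℕ} {g u : ℝ → ℝ} {F G : Measure ℝ}

theorem integral_hingeInterp_pow {μ : Measure ℝ} [IsFiniteMeasure μ] (ha : ∀ᵐ x ∂μ, a ≤ x)
    (N : ℕ) :
    ∫ x, hingeInterp g a b N x ^ n ∂μ =
      ∑ p ∈ Fintype.piFinset fun _ : Fin n => Finset.range N,
        (∏ j, slopeJump g a b N (p j)) * ∫ x, ∏ j, max (gridPoint a b N (p j + 1) - x) 0 ∂μ := by
  simp only [hingeInterp, Finset.sum_pow', Finset.prod_mul_distrib]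
  rw [integral_finsetSum _ fun p _ => (integrable_prod_max_sub ha _).const_mul _]
  simp only [integral_const_mul]

theorem tendsto_integral_hingeInterp_pow {μ : Measure ℝ} [IsFiniteMeasure μ] (hab : a < b)
    (hμ : ∀ᵐ x ∂μ, x ∈ Icc a b) (hg : ConvexOn ℝ (Icc a b) g) (hanti : AntitoneOn g (Icc a b))
    (hgb : g b = 0) :
    Tendsto (fun N => ∫ x, hingeInterp g a b N x ^ n ∂μ) atTop (𝓝 (∫ x, g x ^ n ∂μ)) := by
  refine tendsto_integral_filter_of_dominated_convergence (fun _ => g a ^ n)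
    (Eventually.of_forall fun N => (continuous_hingeInterp.pow n).aestronglyMeasurable) ?_
    (integrable_const _) (hμ.mono fun x hx => (tendsto_hingeInterp hab hg hanti hgb hx).pow n)
  filter_upwards [eventually_ne_atTop 0] with N hN
  filter_upwards [hμ] with x hx
  obtain ⟨h0, hle⟩ := hingeInterp_mem_Icc hab hg hanti hgb hN hx
  rw [norm_pow, Real.norm_of_nonneg h0]
  gcongr

theorem SuffOrder.integral_pow_le [IsFiniteMeasure F] [IsFiniteMeasure G]
    (h : SuffOrder n a b F G) (hab : a < b)
    (hF : ∀ᵐ x ∂F, x ∈ Icc a b) (hG : ∀ᵐ x ∂G, x ∈ Icc a b) (hg : ConvexOn ℝ (Icc a b) g)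
    (hanti : AntitoneOn g (Icc a b)) (hgb : g b = 0) :
    ∫ x, g x ^ n ∂F ≤ ∫ x, g x ^ n ∂G := by
  refine le_of_tendsto_of_tendsto' (tendsto_integral_hingeInterp_pow hab hF hg hanti hgb)
    (tendsto_integral_hingeInterp_pow hab hG hg hanti hgb) fun N => ?_
  rw [integral_hingeInterp_pow (hF.mono fun _ hx => hx.1),
    integral_hingeInterp_pow (hG.mono fun _ hx => hx.1)]
  refine Finset.sum_le_sum fun p hp => ?_
  have hpN (j : Fin n) : p j < N := Finset.mem_range.1 (Fintype.mem_piFinset.1 hp j)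
  exact mul_le_mul_of_nonneg_left (h _ fun j => gridPoint_mem_Icc hab.le (hpN j))
    (Finset.prod_nonneg fun j _ => slopeJump_nonneg hab.le hg hanti (hpN j))

theorem MemI.integrable {α : ℝ} (hu : MemI α a b u) {μ : Measure ℝ} [IsFiniteMeasure μ]
    (hμ : ∀ᵐ x ∂μ, x ∈ Icc a b) : Integrable u μ := by
  obtain ⟨⟨M, hM⟩, hmeas, -⟩ := hu
  exact Integrable.of_bound hmeas.aestronglyMeasurable M (hμ.mono hM)

theorem MemI.antitoneOn_rpow {α : ℝ} (hu : MemI α a b u) (hα : 0 ≤ α) :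
    AntitoneOn (fun x => (u b - u x) ^ (1 / α)) (Icc a b) := by
  obtain ⟨-, -, hmono, hnonneg, -⟩ := hu
  intro x hx y hy hxy
  exact Real.rpow_le_rpow (hnonneg y hy) (sub_le_sub_left (hmono hx hy hxy) _)
    (one_div_nonneg.2 hα)

theorem SuffOrder.concaveOrder [IsProbabilityMeasure F] [IsProbabilityMeasure G]
    (h : SuffOrder n a b F G) (hn : n ≠ 0) (hab : a < b)
    (hF : ∀ᵐ x ∂F, x ∈ Icc a b) (hG : ∀ᵐ x ∂G, x ∈ Icc a b) : ConcaveOrder n a b F G := by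
  intro u hu
  obtain ⟨-, -, -, hnonneg, hconvex⟩ := id hu
  have hgb : (u b - u b) ^ (1 / n : ℝ) = 0 := by
    rw [sub_self, Real.zero_rpow (one_div_ne_zero (Nat.cast_ne_zero.2 hn))]
  have hint {μ : Measure ℝ} [IsProbabilityMeasure μ] (hμ : ∀ᵐ x ∂μ, x ∈ Icc a b) :
      ∫ x, ((u b - u x) ^ (1 / n : ℝ)) ^ n ∂μ = u b - ∫ x, u x ∂μ := by
    calc ∫ x, ((u b - u x) ^ (1 / n : ℝ)) ^ n ∂μ = ∫ x, (u b - u x) ∂μ :=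
          integral_congr_ae <| hμ.mono fun x hx => by
            simp only [one_div, Real.rpow_inv_natCast_pow (hnonneg x hx) hn]
      _ = u b - ∫ x, u x ∂μ := by
          rw [integral_sub (integrable_const _) (hu.integrable hμ), integral_const, probReal_univ,
            one_smul]
  have := h.integral_pow_le hab hF hG hconvex (hu.antitoneOn_rpow n.cast_nonneg) hgb
  rw [hint hF, hint hG] at this
  exact (sub_le_sub_iff_left _).1 this

theorem memI_neg_max_sub_pow (hn : n ≠ 0) {c : ℝ} (hcb : c ≤ b) :
    MemI n a b fun x => -max (c - x) 0 ^ n := by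
  have hcont : Continuous fun x : ℝ => -max (c - x) 0 ^ n := by fun_prop
  have hb : max (c - b) 0 = 0 := max_eq_right (sub_nonpos.2 hcb)
  have hconvex : ConvexOn ℝ (Icc a b) fun x => max (c - x) 0 :=
    ((convexOn_const c (convex_Icc a b)).sub (concaveOn_id (convex_Icc a b))).sup
      (convexOn_const 0 (convex_Icc a b))
  refine ⟨isCompact_Icc.exists_bound_of_continuousOn hcont.continuousOn, hcont.measurable, ?_, ?_⟩
  · intro x _ y _ hxy
    dsimp only
    gcongr
  · simp only [AlphaConvexOn, hb, zero_pow hn, neg_zero, sub_neg_eq_add, zero_add, one_div,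
      Real.pow_rpow_inv_natCast (le_max_right (_ : ℝ) 0) hn]
    exact ⟨fun x _ => by positivity, hconvex⟩

theorem ConcaveOrder.integral_max_sub_pow_le (h : ConcaveOrder n a b F G) (hn : n ≠ 0) {c : ℝ}
    (hcb : c ≤ b) : ∫ x, max (c - x) 0 ^ n ∂F ≤ ∫ x, max (c - x) 0 ^ n ∂G := by
  have := h _ (memI_neg_max_sub_pow hn hcb)
  rwa [integral_neg, integral_neg, neg_le_neg_iff] at this

end StochasticOrders

theorem stmt_10 (a b : ℝ) (hab : a < b)
    (F G : Measure ℝ) [IsProbabilityMeasure F] [IsProbabilityMeasure G]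
    (hF : F (Icc a b)ᶜ = 0) (hG : G (Icc a b)ᶜ = 0)
    (himp : (∀ c ∈ Icc a b,
        (∫ x in a..c, ((∫ z in a..x, cdfR F z) - ∫ z in a..x, cdfR G z)) ≤ 0) →
      (∀ c ∈ Icc a b,
        (b - c) * ((∫ x in a..c, cdfR F x) - ∫ x in a..c, cdfR G x) +
          2 * ∫ x in a..c, ((∫ z in a..x, cdfR F z) - ∫ z in a..x, cdfR G z) ≤ 0)) :
    (∀ c ∈ Icc a b,
        (∫ x in a..c, ((∫ z in a..x, cdfR F z) - ∫ z in a..x, cdfR G z)) ≤ 0) ↔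
      ConcaveOrder 2 a b F G := by
  have hF' : ∀ᵐ x ∂F, x ∈ Icc a b := mem_ae_iff.2 hF
  have hG' : ∀ᵐ x ∂G, x ∈ Icc a b := mem_ae_iff.2 hG
  have hFa := hF'.mono fun _ hx => hx.1
  have hGa := hG'.mono fun _ hx => hx.1
  constructor
  · intro h₂
    have hsuff := suffOrder_two_of_integral_cdfR_nonpos hFa hGa (himp h₂) h₂
    exact_mod_cast hsuff.concaveOrder two_ne_zero hab hF' hG'
  · intro h c hc
    rw [integral_sub_integral_cdfR_nonpos_iff hFa hGa hc.1]
    exact ConcaveOrder.integral_max_sub_pow_le (n := 2) (by exact_mod_cast h) two_ne_zero hc.2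
end
end

section
/- Let a < b be reals and let f : [a,b] → ℝ be a bounded measurable weakly decreasing function such that x ↦ f(x) − f(b) is 2-convex (i.e., x ↦ √(f(x) − f(b)) is convex on [a,b]); that is, f ∈ −I_{2,[a,b]}. Then for all real t ≥ 1/3 and all γ with 2/(3+√3) ≤ γ ≤ 1: f(γ·b + (1−γ)·a) ≤ (1/(b−a))·∫_a^b f(x) dx ≤ t·f(a) + (1−t)·f(b). (A Hermite–Hadamard type inequality for 2,[a,b]-convex decreasing functions.) -/
open MeasureTheory Set

noncomputable section

/-!
After subtracting `f b`, write `v = g ^ α` with `g` convex, nonnegative and `g b = 0`. The upper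
bound integrates the `α`-th power of the chord of `g` from `a` to `b`. For the lower bound at `c`,
the supporting line of `g` at `c` vanishes at some `p ∈ [c, b]`, so that `v x ≥ K * (p - x) ^ α` on
`[a, p]` with equality at `c`, and hence `∫ v ≥ K * (p - a) ^ (α + 1) / (α + 1)`. Comparing this
with `(b - a) * v c = (b - a) * K * (p - c) ^ α`, weighted AM-GM and Bernoulli's inequality show
that the worst case is `p = b`, which gives the constant `(α + 1) ^ (-1 / α)`.
-/

lemma add_rightDeriv_mul_sub_le {S : Set ℝ} {g : ℝ → ℝ} (hg : ConvexOn ℝ S g) {c x : ℝ}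
    (hc : c ∈ interior S) (hx : x ∈ S) :
    g c + derivWithin g (Ioi c) c * (x - c) ≤ g x := by
  rcases lt_trichotomy x c with hxc | rfl | hcx
  · have hslope : slope g x c ≤ derivWithin g (Ioi c) c :=
      (hg.slope_le_leftDeriv_of_mem_interior hx hc hxc).trans
        (hg.leftDeriv_le_rightDeriv_of_mem_interior hc)
    rw [slope_def_field, div_le_iff₀ (sub_pos.2 hxc)] at hslope
    linarith
  · simp
  · have hslope := hg.rightDeriv_le_slope_of_mem_interior hc hx hcx
    rw [slope_def_field, le_div_iff₀ (sub_pos.2 hcx)] at hslope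
    linarith

lemma exists_mul_sub_le {a b c : ℝ} {g : ℝ → ℝ} (hg : ConvexOn ℝ (Icc a b) g) (hgb : g b ≤ 0)
    (hc : c ∈ Ioo a b) (hgc : 0 < g c) :
    ∃ m > 0, ∃ p ∈ Icc c b, g c = m * (p - c) ∧ ∀ x ∈ Icc a b, m * (p - x) ≤ g x := by
  have hcb : 0 < b - c := sub_pos.2 hc.2
  obtain ⟨m, hsupport⟩ : ∃ m, ∀ x ∈ Icc a b, g c - m * (x - c) ≤ g x := by
    refine ⟨-derivWithin g (Ioi c) c, fun x hx => ?_⟩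
    rw [neg_mul, sub_neg_eq_add]
    exact add_rightDeriv_mul_sub_le hg (interior_Icc (a := a) (b := b) ▸ hc) hx
  have hgc_le : g c ≤ m * (b - c) := by
    linarith [hsupport b (right_mem_Icc.2 (hc.1.trans hc.2).le)]
  have hm : 0 < m := pos_of_mul_pos_left (hgc.trans_le hgc_le) hcb.le
  have hp : g c = m * (c + g c / m - c) := by field_simp; ring
  refine ⟨m, hm, c + g c / m, ⟨by simpa using (div_pos hgc hm).le, ?_⟩, hp, fun x hx => ?_⟩
  · rwa [← le_sub_iff_add_le', div_le_iff₀' hm]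
  · linarith [hsupport x hx]

lemma integral_sub_left_rpow {α : ℝ} (hα : -1 < α) (a p : ℝ) :
    ∫ x in a..p, (p - x) ^ α = (p - a) ^ (α + 1) / (α + 1) := by
  rw [intervalIntegral.integral_comp_sub_left (fun x => x ^ α), sub_self,
    integral_rpow (Or.inl hα), Real.zero_rpow (by linarith), sub_zero]

lemma add_one_mul_rpow_neg_one_div_rpow {α : ℝ} (hα : 0 < α) :
    (α + 1) * ((α + 1) ^ (-1 / α)) ^ α = 1 := by
  rw [← Real.rpow_mul (by positivity), div_mul_cancel₀ _ hα.ne', Real.rpow_neg_one,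
    mul_inv_cancel₀ (by positivity)]

lemma le_div_add_one_of_add_one_mul_rpow_eq_one {α s : ℝ} (hα : 1 ≤ α) (hs : 0 ≤ s)
    (hsα : (α + 1) * s ^ α = 1) : s ≤ α / (α + 1) := by
  have : 0 < α + 1 := by linarith
  have hbernoulli : 1 + α * -(α + 1)⁻¹ ≤ (1 + -(α + 1)⁻¹) ^ α :=
    one_add_mul_self_le_rpow_one_add (neg_le_neg (inv_le_one_of_one_le₀ (by linarith))) hα
  rw [← Real.rpow_le_rpow_iff hs (by positivity) (by linarith : 0 < α)]
  convert hbernoulli using 1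
  · field_simp
    linarith
  · congr 1
    field_simp
    ring

lemma add_one_mul_rpow_mul_le_rpow {α s y z L : ℝ} (hα : 1 ≤ α) (hs : 0 < s)
    (hsα : (α + 1) * s ^ α = 1) (hy : 0 ≤ y) (hzL : z ≤ L) (hyz : y ≤ z - (1 - s) * L) :
    (α + 1) * (y ^ α * L) ≤ z ^ (α + 1) := by
  have : 0 < α := by linarith
  have hL : 0 ≤ L := by nlinarith only [hs, hy, hzL, hyz]
  have hα_le : α + 1 ≤ α / s := by
    rw [le_div_iff₀ hs, mul_comm, ← le_div_iff₀ (by positivity)]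
    exact le_div_add_one_of_add_one_mul_rpow_eq_one hα hs.le hsα
  have hmean : α / (α + 1) * (y / s) + 1 / (α + 1) * L ≤ z := by
    have : 0 ≤ L - z := sub_nonneg.2 hzL
    have hy_le : y ≤ s * L - (L - z) := by linarith
    calc α / (α + 1) * (y / s) + 1 / (α + 1) * L
        ≤ α / (α + 1) * ((s * L - (L - z)) / s) + 1 / (α + 1) * L := by gcongr
      _ = L - α / s * (L - z) / (α + 1) := by field_simp; ring
      _ ≤ L - (α + 1) * (L - z) / (α + 1) := by gcongr
      _ = z := by field_simp; ring
  have hamgm : (y / s) ^ (α / (α + 1)) * L ^ (1 / (α + 1)) ≤ z :=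
    (Real.geom_mean_le_arith_mean2_weighted (by positivity) (by positivity) (by positivity) hL
      (by field_simp)).trans hmean
  calc (α + 1) * (y ^ α * L) = (y / s) ^ α * L := by
        rw [Real.div_rpow hy hs.le, div_eq_mul_inv, ← eq_inv_of_mul_eq_one_left hsα]
        ring
    _ = ((y / s) ^ (α / (α + 1)) * L ^ (1 / (α + 1))) ^ (α + 1) := by
        rw [Real.mul_rpow (by positivity) (by positivity), ← Real.rpow_mul (by positivity),
          ← Real.rpow_mul hL, div_mul_cancel₀ _ (by positivity), div_mul_cancel₀ _ (by positivity),
          Real.rpow_one]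
    _ ≤ z ^ (α + 1) := Real.rpow_le_rpow (by positivity) hamgm (by positivity)

lemma two_div_three_add_sqrt_three : 2 / (3 + √3) = 1 - ((2 : ℝ) + 1) ^ (-1 / (2 : ℝ)) := by
  have hroot : ((2 : ℝ) + 1) ^ (-1 / (2 : ℝ)) = (√3)⁻¹ := by
    rw [neg_div, Real.rpow_neg (by norm_num), ← Real.sqrt_eq_rpow]
    norm_num
  rw [hroot]
  field_simp
  linear_combination -Real.sq_sqrt (zero_le_three : (0 : ℝ) ≤ 3)

namespace AlphaConvexOn

variable {α a b c x : ℝ} {v : ℝ → ℝ}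

lemma antitoneOn (hv : AlphaConvexOn α a b v) (hα : 0 < α) (hvb : v b = 0) :
    AntitoneOn v (Icc a b) := by
  intro x hx y hy hxy
  have hb : b ∈ Icc a b := ⟨hx.1.trans hx.2, le_rfl⟩
  have hroot := hv.2.le_max_of_mem_Icc hx hb ⟨hxy, hy.2⟩
  rwa [hvb, Real.zero_rpow (by positivity), max_eq_left (Real.rpow_nonneg (hv.1 x hx) _),
    Real.rpow_le_rpow_iff (hv.1 y hy) (hv.1 x hx) (by positivity)] at hroot

lemma intervalIntegrable (hv : AlphaConvexOn α a b v) (hα : 0 < α) (hvb : v b = 0)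
    (hab : a ≤ b) : IntervalIntegrable v volume a b :=
  AntitoneOn.intervalIntegrable (uIcc_of_le hab ▸ hv.antitoneOn hα hvb)

lemma le_mul_rpow (hv : AlphaConvexOn α a b v) (hα : 0 < α) (hvb : v b = 0) (hab : a < b)
    (hx : x ∈ Icc a b) : v x ≤ v a * ((b - x) / (b - a)) ^ α := by
  have hba : 0 < b - a := sub_pos.2 hab
  have ha : a ∈ Icc a b := left_mem_Icc.2 hab.le
  have hw : 0 ≤ (b - x) / (b - a) := div_nonneg (sub_nonneg.2 hx.2) hba.le
  have hchord : v x ^ α⁻¹ ≤ (b - x) / (b - a) * v a ^ α⁻¹ := by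
    have hconv := hv.2.2 ha (right_mem_Icc.2 hab.le) hw
      (div_nonneg (sub_nonneg.2 hx.1) hba.le) (by field_simp; ring)
    have hcomb : (b - x) / (b - a) * a + (x - a) / (b - a) * b = x := by field_simp; ring
    simpa [hcomb, hvb, Real.zero_rpow (inv_ne_zero hα.ne')] using hconv
  rwa [Real.rpow_inv_le_iff_of_pos (hv.1 x hx) (mul_nonneg hw (Real.rpow_nonneg (hv.1 a ha) _)) hα,
    Real.mul_rpow hw (Real.rpow_nonneg (hv.1 a ha) _), Real.rpow_inv_rpow (hv.1 a ha) hα.ne',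
    mul_comm] at hchord

lemma integral_le (hv : AlphaConvexOn α a b v) (hα : 0 < α) (hvb : v b = 0) (hab : a < b) :
    ∫ x in a..b, v x ≤ (b - a) * (v a / (α + 1)) := by
  have hba : 0 < b - a := sub_pos.2 hab
  calc ∫ x in a..b, v x ≤ ∫ x in a..b, v a * ((b - x) / (b - a)) ^ α :=
        intervalIntegral.integral_mono_on hab.le (hv.intervalIntegrable hα hvb hab.le)
          (Continuous.intervalIntegrable (by fun_prop (disch := positivity)) _ _)
          fun x hx => hv.le_mul_rpow hα hvb hab hx
    _ = ∫ x in a..b, v a / (b - a) ^ α * (b - x) ^ α := by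
        refine intervalIntegral.integral_congr fun x hx => ?_
        rw [uIcc_of_le hab.le] at hx
        simp only [Real.div_rpow (sub_nonneg.2 hx.2) hba.le, div_mul_eq_mul_div, mul_div_assoc]
    _ = (b - a) * (v a / (α + 1)) := by
        rw [intervalIntegral.integral_const_mul, integral_sub_left_rpow (by linarith),
          Real.rpow_add_one hba.ne']
        have : 0 < (b - a) ^ α := by positivity
        field_simp

lemma exists_mul_sub_rpow_le (hv : AlphaConvexOn α a b v) (hα : 0 < α) (hvb : v b = 0)
    (hc : c ∈ Ioc a b) :
    ∃ K ≥ 0, ∃ p ∈ Icc c b, v c = K * (p - c) ^ α ∧ ∀ x ∈ Icc a p, K * (p - x) ^ α ≤ v x := by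
  have hcm : c ∈ Icc a b := Ioc_subset_Icc_self hc
  obtain hvc | hvc := (hv.1 c hcm).eq_or_lt
  · exact ⟨0, le_rfl, b, ⟨hc.2, le_rfl⟩, by simp [← hvc], fun x hx => by simpa using hv.1 x hx⟩
  have hcb : c < b := hc.2.lt_of_ne fun h => hvc.ne' (h ▸ hvb)
  have hroot_rpow {x} (hx : x ∈ Icc a b) : (v x ^ (1 / α)) ^ α = v x := by
    rw [one_div, Real.rpow_inv_rpow (hv.1 x hx) hα.ne']
  obtain ⟨m, hm, p, ⟨hcp, hpb⟩, hroot_c, hline⟩ :=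
    exists_mul_sub_le hv.2 (by simp [hvb, hα.ne']) ⟨hc.1, hcb⟩ (Real.rpow_pos_of_pos hvc _)
  refine ⟨m ^ α, by positivity, p, ⟨hcp, hpb⟩, ?_, fun x hx => ?_⟩
  · rw [← Real.mul_rpow hm.le (sub_nonneg.2 hcp), ← hroot_c, hroot_rpow hcm]
  · have hxm : x ∈ Icc a b := ⟨hx.1, hx.2.trans hpb⟩
    have hpx : 0 ≤ p - x := sub_nonneg.2 hx.2
    rw [← Real.mul_rpow hm.le hpx, ← hroot_rpow hxm]
    exact Real.rpow_le_rpow (by positivity) (hline x hxm) hα.le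

lemma mul_le_integral (hv : AlphaConvexOn α a b v) (hα : 1 ≤ α) (hvb : v b = 0) (hab : a < b)
    (hcb : c ≤ b) (hc : b - c ≤ (α + 1) ^ (-1 / α) * (b - a)) :
    (b - a) * v c ≤ ∫ x in a..b, v x := by
  have hα0 : 0 < α := by linarith
  set s : ℝ := (α + 1) ^ (-1 / α)
  have hs : 0 < s := by positivity
  have hsα : (α + 1) * s ^ α = 1 := add_one_mul_rpow_neg_one_div_rpow hα0
  have hs1 : s < 1 := (le_div_add_one_of_add_one_mul_rpow_eq_one hα hs.le hsα).trans_lt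
    ((div_lt_one (by positivity)).2 (lt_add_one α))
  have hac : a < c := by linarith [mul_lt_of_lt_one_left (sub_pos.2 hab) hs1]
  obtain ⟨K, hK, p, ⟨hcp, hpb⟩, hvc, hKv⟩ := hv.exists_mul_sub_rpow_le hα0 hvb ⟨hac, hcb⟩
  have hap : a ≤ p := hac.le.trans hcp
  have hint := hv.intervalIntegrable hα0 hvb hab.le
  have hpow : (α + 1) * ((p - c) ^ α * (b - a)) ≤ (p - a) ^ (α + 1) :=
    add_one_mul_rpow_mul_le_rpow hα hs hsα (by linarith) (by linarith) (by linarith)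
  calc (b - a) * v c = K * ((p - c) ^ α * (b - a)) := by rw [hvc]; ring
    _ ≤ K * ((p - a) ^ (α + 1) / (α + 1)) := by
        gcongr
        rwa [le_div_iff₀' (by positivity)]
    _ = ∫ x in a..p, K * (p - x) ^ α := by
        rw [intervalIntegral.integral_const_mul, integral_sub_left_rpow (by linarith)]
    _ ≤ ∫ x in a..p, v x :=
        intervalIntegral.integral_mono_on hap
          (Continuous.intervalIntegrable (by fun_prop (disch := positivity)) _ _)
          (hint.mono_set (uIcc_subset_uIcc_left (by rw [uIcc_of_le hab.le]; exact ⟨hap, hpb⟩))) hKv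
    _ ≤ ∫ x in a..b, v x :=
        intervalIntegral.integral_mono_interval le_rfl hap hpb
          (ae_restrict_of_forall_mem measurableSet_Ioc
            fun x hx => hv.1 x (Ioc_subset_Icc_self hx)) hint

end AlphaConvexOn

theorem stmt_16_general {α a b t γ : ℝ} {f : ℝ → ℝ} (hα : 1 ≤ α) (hab : a < b)
    (hf : AlphaConvexOn α a b (fun x => f x - f b)) (ht : 1 / (α + 1) ≤ t)
    (hγ : 1 - (α + 1) ^ (-1 / α) ≤ γ) (hγ1 : γ ≤ 1) :
    f (γ * b + (1 - γ) * a) ≤ (1 / (b - a)) * ∫ x in Icc a b, f x ∧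
      (1 / (b - a)) * ∫ x in Icc a b, f x ≤ t * f a + (1 - t) * f b := by
  have hα0 : 0 < α := by linarith
  have hba : 0 < b - a := sub_pos.2 hab
  have hf_int : ∫ x in a..b, f x = (∫ x in a..b, (f x - f b)) + (b - a) * f b := by
    have := intervalIntegral.integral_add (hf.intervalIntegrable hα0 (sub_self _) hab.le)
      (intervalIntegrable_const (c := f b))
    simpa only [sub_add_cancel, intervalIntegral.integral_const, smul_eq_mul] using this
  rw [integral_Icc_eq_integral_Ioc, ← intervalIntegral.integral_of_le hab.le, one_div_mul_eq_div,
    le_div_iff₀' hba, div_le_iff₀' hba, hf_int]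
  constructor
  · have hlower := hf.mul_le_integral (c := γ * b + (1 - γ) * a) hα (sub_self _) hab
      (by nlinarith only [hγ1, hab]) (by nlinarith only [hγ, hab])
    linarith
  · have hupper := hf.integral_le hα0 (sub_self _) hab
    have hva : 0 ≤ f a - f b := hf.1 a (left_mem_Icc.2 hab.le)
    have ht' : (f a - f b) / (α + 1) ≤ t * (f a - f b) := by
      rw [div_eq_mul_one_div, mul_comm]
      gcongr
    linarith [mul_le_mul_of_nonneg_left ht' hba.le]

theorem stmt_16 (a b : ℝ) (hab : a < b) (f : ℝ → ℝ)
    (hf : MemI 2 a b (fun x => -f x)) :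
    ∀ t : ℝ, 1 / 3 ≤ t → ∀ γ : ℝ, 2 / (3 + Real.sqrt 3) ≤ γ → γ ≤ 1 →
      f (γ * b + (1 - γ) * a) ≤ (1 / (b - a)) * ∫ x in Icc a b, f x ∧
        (1 / (b - a)) * ∫ x in Icc a b, f x ≤ t * f a + (1 - t) * f b := by
  intro t ht γ hγ hγ1
  exact stmt_16_general one_le_two hab (by simpa only [neg_sub_neg] using hf.2.2.2)
    (by linarith) (two_div_three_add_sqrt_three ▸ hγ) hγ1
end
end
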